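/- (Backstepping transformation of the PDE subsystem.) Let θ ≥ 0, Σ : ℝ² → M₂(ℝ) continuous, v* ∈ ℝ², z* ∈ C⁰([0,1]; ℝ²), q > 0, A₁* := A₁ + qI₂, and ϖ(X) := −G₁⁻¹A₁*X for X ∈ ℝ². Let M ∈ C¹([0,1]; M₂(ℝ)) and N ∈ M₂(ℝ) satisfy M(0) = 0, ∫₀¹ K₁(ξ)M(ξ) dξ = I₂, and Λ M′(ξ) = θ Σ(v*)(M(ξ) + (𝒦₂M)) + (𝒦₃M) + HN on (0,1). Let T > 0, let U_δ, w : [0,T] → ℝ² be continuous, let X_δ ∈ C¹([0,T]; ℝ²), and let z_δ : [0,1]×[0,T] → ℝ² be a C¹ function with z_δ(0,t) = 0 satisfying X_δ′(t) = A₁X_δ(t) + G₁(𝒦₁ z_δ(·,t)) and ∂z_δ/∂t + Λ ∂z_δ/∂ξ = θ Σ(w(t))[z_δ(ξ,t) + (𝒦₂ z_δ(·,t))] + (𝒦₃ z_δ(·,t)) + θ(Σ(w(t)) − Σ(v*))[z*(ξ) + (𝒦₂z*)] + H(A₂X_δ(t) + G₂U_δ(t)) on (0,1)×(0,T). Then ζ(ξ,t)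 := z_δ(ξ,t) − M(ξ)ϖ(X_δ(t)) satisfies ζ(0,t) = 0, (𝒦₁ ζ(·,t)) = (𝒦₁ z_δ(·,t)) − ϖ(X_δ(t)), and ∂ζ/∂t + Λ ∂ζ/∂ξ = θ Σ(w(t))[ζ(ξ,t) + (𝒦₂ ζ(·,t))] + (𝒦₃ ζ(·,t)) + θ(Σ(w(t)) − Σ(v*))[z*(ξ) + (𝒦₂z*)] + H[(A₂X_δ(t) + G₂U_δ(t)) − Nϖ(X_δ(t))] + θ(Σ(w(t)) − Σ(v*))[M(ξ) + (𝒦₂M)]ϖ(X_δ(t)) − M(ξ)·ϖ̇(t), where ϖ̇(t) := −G₁⁻¹A₁*X_δ′(t). -/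

import Mathlib

open MeasureTheory Matrix Set

noncomputable section

attribute [local instance] Matrix.normedAddCommGroup Matrix.normedSpace

abbrev Vec2 := Fin 2 → ℝ
abbrev Mat2 := Matrix (Fin 2) (Fin 2) ℝ

/-- Nondimensional pressure distribution `p̄(ξ) = (a/(1-e^{-a})) e^{-aξ}`. -/
def pbar (a ξ : ℝ) : ℝ := a / (1 - Real.exp (-a)) * Real.exp (-a * ξ)

/-- The physical parameters of the single-track tire model. -/
structure TireParams where
  vx : ℝ
  L1 : ℝ
  L2 : ℝ
  Fz1 : ℝ
  Fz2 : ℝ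
  σ1 : ℝ
  σ2 : ℝ
  a1 : ℝ
  a2 : ℝ
  φ1 : ℝ
  φ2 : ℝ
  vx_pos : 0 < vx
  L1_pos : 0 < L1
  L2_pos : 0 < L2
  Fz1_pos : 0 < Fz1
  Fz2_pos : 0 < Fz2
  σ1_pos : 0 < σ1
  σ2_pos : 0 < σ2
  a1_pos : 0 < a1
  a2_pos : 0 < a2
  φ1_mem : φ1 ∈ Set.Ioc (0:ℝ) 1
  φ2_mem : φ2 ∈ Set.Ioc (0:ℝ) 1

namespace TireParams

variable (P : TireParams)

def ψ1 : ℝ := 1 - P.φ1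
def ψ2 : ℝ := 1 - P.φ2

def Λmat : Mat2 := Matrix.diagonal ![P.vx / P.L1, P.vx / P.L2]

def Hmat : Mat2 := (2:ℝ) • Matrix.diagonal ![P.φ1, P.φ2]

def K1 (ξ : ℝ) : Mat2 :=
  Matrix.diagonal ![P.Fz1 * P.σ1 * pbar P.a1 ξ, P.Fz2 * P.σ2 * pbar P.a2 ξ]

def K2 (ξ : ℝ) : Mat2 :=
  -Matrix.diagonal ![P.ψ1 * pbar P.a1 ξ, P.ψ2 * pbar P.a2 ξ]

def K3 (ξ : ℝ) : Mat2 :=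
  -P.vx • Matrix.diagonal ![P.ψ1 / P.L1 * deriv (pbar P.a1) ξ, P.ψ2 / P.L2 * deriv (pbar P.a2) ξ]

def K4 : Mat2 :=
  P.vx • Matrix.diagonal ![P.ψ1 / P.L1 * pbar P.a1 1, P.ψ2 / P.L2 * pbar P.a2 1]

def Q (ξ : ℝ) : Mat2 := P.K1 ξ * (P.Hmat)⁻¹

/-- `(𝒦ζ) = ∫₀¹ K(ξ) ζ(ξ) dξ`. -/
def Kop (K : ℝ → Mat2) (ζ : ℝ → Vec2) : Vec2 := ∫ ξ in (0:ℝ)..1, (K ξ).mulVec (ζ ξ)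

def K1op (ζ : ℝ → Vec2) : Vec2 := Kop P.K1 ζ

def K2op (ζ : ℝ → Vec2) : Vec2 := Kop P.K2 ζ

/-- `(𝒦₃ζ) = ∫₀¹ K₃(ξ)ζ(ξ)dξ + K₄ ζ(1)`. -/
def K3op (ζ : ℝ → Vec2) : Vec2 := Kop P.K3 ζ + (P.K4).mulVec (ζ 1)

/-- `(𝒜ζ)(ξ) = -Λ ζ'(ξ) + (𝒦₃ζ)`, expressed through a given derivative `ζ'`. -/
def Aop (ζ ζ' : ℝ → Vec2) (ξ : ℝ) : Vec2 := -(P.Λmat).mulVec (ζ' ξ) + P.K3op ζ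

end TireParams

/-- `ζ` is C¹ on `[0,1]` with derivative `ζ'`. -/
def IsC1On01 (ζ ζ' : ℝ → Vec2) : Prop :=
  (∀ ξ ∈ Icc (0:ℝ) 1, HasDerivWithinAt ζ (ζ' ξ) (Icc (0:ℝ) 1) ξ) ∧
    ContinuousOn ζ' (Icc (0:ℝ) 1)

/-- Square integrability on `(0,1)`. -/
def SqIntegrableOn01 (ζ : ℝ → Vec2) : Prop :=
  Measurable ζ ∧ IntervalIntegrable (fun ξ => ∑ i, (ζ ξ i) ^ 2) volume 0 1

/-- Assumption 1 (strict dissipativity of `𝒜`). -/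
def Assumption1 (P : TireParams) (ω : ℝ) : Prop :=
  ∀ ζ ζ' : ℝ → Vec2, IsC1On01 ζ ζ' → ζ 0 = 0 →
    (∫ ξ in (0:ℝ)..1, P.Aop ζ ζ' ξ ⬝ᵥ (P.Q ξ).mulVec (ζ ξ)) ≤
      -ω * ∫ ξ in (0:ℝ)..1, ∑ i, (ζ ξ i) ^ 2

/-- Assumption 2 (dissipativity of the source `Σ`). -/
def Assumption2 (P : TireParams) (S : Vec2 → Mat2) : Prop :=
  ∀ y : Vec2, ∀ ζ : ℝ → Vec2, SqIntegrableOn01 ζ →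
    (∫ ξ in (0:ℝ)..1, ζ ξ ⬝ᵥ (P.Q ξ).mulVec ((S y).mulVec (ζ ξ + P.K2op ζ))) ≤ 0

/-- Matrix-valued `M` is C¹ on `[0,1]` with derivative `M'`. -/
def IsC1MatOn01 (M M' : ℝ → Mat2) : Prop :=
  (∀ ξ ∈ Icc (0:ℝ) 1, HasDerivWithinAt M (M' ξ) (Icc (0:ℝ) 1) ξ) ∧
    ContinuousOn M' (Icc (0:ℝ) 1)

def A1mat (vx : ℝ) : Mat2 := !![0, -vx; 0, 0]

def A2mat (l1 l2 : ℝ) : Mat2 := !![1, l1; 1, -l2]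

def G1mat (m Iz l1 l2 : ℝ) : Mat2 := -!![1/m, 1/m; l1/Iz, -l2/Iz]

def G2mat (vx : ℝ) : Mat2 := -vx • (1 : Mat2)

/-- `(𝒦M) = ∫₀¹ K(ξ)M(ξ)dξ` for matrix-valued `M`. -/
def KopM (K : ℝ → Mat2) (M : ℝ → Mat2) : Mat2 := ∫ ξ in (0:ℝ)..1, K ξ * M ξ

/-- The virtual control law `ϖ(X) = −G₁⁻¹(A₁ + qI₂)X`. -/
def varpi (G1 A1 : Mat2) (q : ℝ) (X : Vec2) : Vec2 :=
  -(G1⁻¹ * (A1 + q • (1 : Mat2))).mulVec X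

/-- `ϖ̇(t) = −G₁⁻¹A₁*X_δ'(t)`. -/
def varpidot (G1 A1 : Mat2) (q : ℝ) (Xδ' : ℝ → Vec2) (t : ℝ) : Vec2 :=
  -(G1⁻¹ * (A1 + q • (1 : Mat2))).mulVec (Xδ' t)

theorem hasDerivWithinAt_mat_mulVec {M : ℝ → Mat2} {D : Mat2} {s : Set ℝ} {x : ℝ}
    (h : HasDerivWithinAt M D s x) (v : Vec2) :
    HasDerivWithinAt (fun y => (M y).mulVec v) (D.mulVec v) s x := by
  have h1 := fun i => hasDerivWithinAt_pi.1 (hasDerivWithinAt_pi.1 h i)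
  rw [hasDerivWithinAt_pi]
  intro i
  simp only [Matrix.mulVec, dotProduct]
  exact HasDerivWithinAt.fun_sum fun j _ => (h1 i j).mul_const (v j)

theorem hasDerivWithinAt_mulVec_const (A : Mat2) {f : ℝ → Vec2} {d : Vec2} {s : Set ℝ} {x : ℝ}
    (h : HasDerivWithinAt f d s x) :
    HasDerivWithinAt (fun y => A.mulVec (f y)) (A.mulVec d) s x := by
  have h1 := hasDerivWithinAt_pi.1 h
  rw [hasDerivWithinAt_pi]
  intro i
  simp only [Matrix.mulVec, dotProduct]
  exact HasDerivWithinAt.fun_sum fun j _ => (h1 j).const_mul (A i j)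

/-- Evaluation of a matrix on a fixed vector, as a continuous linear map. -/
def mulVecCLM (v : Vec2) : Mat2 →L[ℝ] Vec2 :=
  LinearMap.toContinuousLinearMap
    { toFun := fun A => A.mulVec v
      map_add' := fun A B => Matrix.add_mulVec A B v
      map_smul' := fun c A => Matrix.smul_mulVec c A v }

theorem mulVecCLM_apply (v : Vec2) (A : Mat2) : mulVecCLM v A = A.mulVec v := rfl

theorem Kop_sub_mulVec {K M : ℝ → Mat2} {z : ℝ → Vec2} (hK : Continuous K)
    (hM : ContinuousOn M (Icc (0:ℝ) 1)) (hz : ContinuousOn z (Icc (0:ℝ) 1)) (v : Vec2) :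
    TireParams.Kop K (fun ξ => z ξ - (M ξ).mulVec v) =
      TireParams.Kop K z - (KopM K M).mulVec v := by
  have hKM : ContinuousOn (fun ξ => K ξ * M ξ) (Icc (0:ℝ) 1) :=
    (Continuous.matrix_mul continuous_fst continuous_snd :
      Continuous fun p : Mat2 × Mat2 => p.1 * p.2).comp_continuousOn (hK.continuousOn.prodMk hM)
  have hKz : ContinuousOn (fun ξ => (K ξ).mulVec (z ξ)) (Icc (0:ℝ) 1) :=
    (Continuous.matrix_mulVec continuous_fst continuous_snd :
      Continuous fun p : Mat2 × Vec2 => p.1.mulVec p.2).comp_continuousOn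
        (hK.continuousOn.prodMk hz)
  have hKM' : ContinuousOn (fun ξ => K ξ * M ξ) (uIcc (0:ℝ) 1) := by
    rwa [uIcc_of_le zero_le_one]
  have i1 := ContinuousOn.intervalIntegrable (E := Mat2) (μ := volume) hKM'
  have i2 : IntervalIntegrable (fun ξ => (K ξ).mulVec (z ξ)) volume (0:ℝ) 1 := by
    apply ContinuousOn.intervalIntegrable
    rwa [uIcc_of_le zero_le_one]
  have i3 : IntervalIntegrable (fun ξ => (K ξ * M ξ).mulVec v) volume (0:ℝ) 1 := by
    apply ContinuousOn.intervalIntegrable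
    rw [uIcc_of_le zero_le_one]
    exact (Continuous.matrix_mulVec continuous_id continuous_const :
      Continuous fun A : Mat2 => A.mulVec v).comp_continuousOn hKM
  have e : (∫ ξ in (0:ℝ)..1, (K ξ * M ξ).mulVec v) =
      (∫ ξ in (0:ℝ)..1, K ξ * M ξ).mulVec v :=
    (mulVecCLM v).intervalIntegral_comp_comm i1
  unfold TireParams.Kop KopM
  rw [← e, ← intervalIntegral.integral_sub i2 i3]
  simp only [Matrix.mulVec_sub, Matrix.mulVec_mulVec]

theorem pbar_continuous (a : ℝ) : Continuous (pbar a) := by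
  unfold pbar; fun_prop

theorem pbar_deriv_continuous (a : ℝ) : Continuous (deriv (pbar a)) := by
  have h : ContDiff ℝ 1 (pbar a) := by unfold pbar; fun_prop
  exact h.continuous_deriv le_rfl

theorem diag_continuous {f g : ℝ → ℝ} (hf : Continuous f) (hg : Continuous g) :
    Continuous (fun ξ => (Matrix.diagonal ![f ξ, g ξ] : Mat2)) := by
  apply Continuous.matrix_diagonal
  refine continuous_pi fun i => ?_
  fin_cases i
  · exact hf
  · exact hg

theorem K1_cont (P : TireParams) : Continuous P.K1 :=
  diag_continuous (continuous_const.mul (pbar_continuous _))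
    (continuous_const.mul (pbar_continuous _))

theorem K2_cont (P : TireParams) : Continuous P.K2 :=
  (diag_continuous (continuous_const.mul (pbar_continuous _))
    (continuous_const.mul (pbar_continuous _))).neg

theorem K3_cont (P : TireParams) : Continuous P.K3 :=
  (diag_continuous (continuous_const.mul (pbar_deriv_continuous _))
    (continuous_const.mul (pbar_deriv_continuous _))).const_smul (-P.vx)

/-- backstepping transformation of the PDE subsystem: the transformed state
`ζ(ξ,t) = z_δ(ξ,t) − M(ξ)ϖ(X_δ(t))` vanishes at `ξ = 0`, satisfies
`𝒦₁ζ = 𝒦₁z_δ − ϖ(X_δ)`, and solves the target PDE. -/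
theorem statement12 (P : TireParams) (m Iz l1 l2 : ℝ)
    (hm : 0 < m) (hIz : 0 < Iz) (hl1 : 0 < l1) (hl2 : 0 < l2)
    (θ : ℝ) (hθ : 0 ≤ θ) (S : Vec2 → Mat2) (hS : Continuous S)
    (vstar : Vec2) (zstar : ℝ → Vec2) (hzstar : ContinuousOn zstar (Icc (0:ℝ) 1))
    (q : ℝ) (hq : 0 < q)
    (M M' : ℝ → Mat2) (N : Mat2) (hM : IsC1MatOn01 M M') (hM0 : M 0 = 0)
    (hMnorm : (∫ ξ in (0:ℝ)..1, P.K1 ξ * M ξ) = (1 : Mat2))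
    (hMode : ∀ ξ ∈ Ioo (0:ℝ) 1,
      P.Λmat * M' ξ =
        θ • (S vstar * (M ξ + KopM P.K2 M)) + (KopM P.K3 M + P.K4 * M 1) + P.Hmat * N)
    (T : ℝ) (hT : 0 < T) (Uδ w : ℝ → Vec2)
    (hU : ContinuousOn Uδ (Icc (0:ℝ) T)) (hw : ContinuousOn w (Icc (0:ℝ) T))
    (Xδ Xδ' : ℝ → Vec2)
    (hXδ : ∀ t ∈ Icc (0:ℝ) T, HasDerivWithinAt Xδ (Xδ' t) (Icc (0:ℝ) T) t)
    (hXδ' : ContinuousOn Xδ' (Icc (0:ℝ) T))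
    (zδ zδξ zδt : ℝ → ℝ → Vec2)
    (hODE : ∀ t ∈ Ioo (0:ℝ) T,
      Xδ' t = (A1mat P.vx).mulVec (Xδ t) +
        (G1mat m Iz l1 l2).mulVec (P.K1op (fun ξ => zδ ξ t)))
    (hzξ : ∀ t ∈ Icc (0:ℝ) T, ∀ ξ ∈ Icc (0:ℝ) 1,
      HasDerivWithinAt (fun s => zδ s t) (zδξ ξ t) (Icc (0:ℝ) 1) ξ)
    (hzt : ∀ ξ ∈ Icc (0:ℝ) 1, ∀ t ∈ Icc (0:ℝ) T,
      HasDerivWithinAt (fun s => zδ ξ s) (zδt ξ t) (Icc (0:ℝ) T) t)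
    (hzc : ContinuousOn (fun p : ℝ × ℝ => zδ p.1 p.2) (Icc (0:ℝ) 1 ×ˢ Icc (0:ℝ) T))
    (hzξc : ContinuousOn (fun p : ℝ × ℝ => zδξ p.1 p.2) (Icc (0:ℝ) 1 ×ˢ Icc (0:ℝ) T))
    (hztc : ContinuousOn (fun p : ℝ × ℝ => zδt p.1 p.2) (Icc (0:ℝ) 1 ×ˢ Icc (0:ℝ) T))
    (hbc : ∀ t ∈ Icc (0:ℝ) T, zδ 0 t = 0)
    (hpde : ∀ ξ ∈ Ioo (0:ℝ) 1, ∀ t ∈ Ioo (0:ℝ) T,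
      zδt ξ t + (P.Λmat).mulVec (zδξ ξ t) =
        θ • (S (w t)).mulVec (zδ ξ t + P.K2op (fun s => zδ s t)) +
          P.K3op (fun s => zδ s t) +
          θ • ((S (w t) - S vstar).mulVec (zstar ξ + P.K2op zstar)) +
          (P.Hmat).mulVec ((A2mat l1 l2).mulVec (Xδ t) + (G2mat P.vx).mulVec (Uδ t))) :
    ∀ ζ : ℝ → ℝ → Vec2,
      (∀ ξ t, ζ ξ t =
        zδ ξ t - (M ξ).mulVec (varpi (G1mat m Iz l1 l2) (A1mat P.vx) q (Xδ t))) →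
      (∀ t ∈ Icc (0:ℝ) T, ζ 0 t = 0) ∧
      (∀ t ∈ Icc (0:ℝ) T,
        P.K1op (fun ξ => ζ ξ t) =
          P.K1op (fun ξ => zδ ξ t) - varpi (G1mat m Iz l1 l2) (A1mat P.vx) q (Xδ t)) ∧
      (∀ ξ ∈ Ioo (0:ℝ) 1, ∀ t ∈ Ioo (0:ℝ) T,
        HasDerivWithinAt (fun s => ζ s t)
          (zδξ ξ t - (M' ξ).mulVec (varpi (G1mat m Iz l1 l2) (A1mat P.vx) q (Xδ t)))
          (Icc (0:ℝ) 1) ξ ∧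
        HasDerivWithinAt (fun s => ζ ξ s)
          (zδt ξ t - (M ξ).mulVec (varpidot (G1mat m Iz l1 l2) (A1mat P.vx) q Xδ' t))
          (Icc (0:ℝ) T) t ∧
        (zδt ξ t - (M ξ).mulVec (varpidot (G1mat m Iz l1 l2) (A1mat P.vx) q Xδ' t)) +
            (P.Λmat).mulVec
              (zδξ ξ t - (M' ξ).mulVec (varpi (G1mat m Iz l1 l2) (A1mat P.vx) q (Xδ t))) =
          θ • (S (w t)).mulVec (ζ ξ t + P.K2op (fun s => ζ s t)) +
            P.K3op (fun s => ζ s t) +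
            θ • ((S (w t) - S vstar).mulVec (zstar ξ + P.K2op zstar)) +
            (P.Hmat).mulVec
              (((A2mat l1 l2).mulVec (Xδ t) + (G2mat P.vx).mulVec (Uδ t)) -
                N.mulVec (varpi (G1mat m Iz l1 l2) (A1mat P.vx) q (Xδ t))) +
            θ • (((S (w t) - S vstar) * (M ξ + KopM P.K2 M)).mulVec
              (varpi (G1mat m Iz l1 l2) (A1mat P.vx) q (Xδ t))) -
            (M ξ).mulVec (varpidot (G1mat m Iz l1 l2) (A1mat P.vx) q Xδ' t)) := by
  intro ζ hζ
  have hMc : ContinuousOn M (Icc (0:ℝ) 1) := fun ξ hξ => (hM.1 ξ hξ).continuousWithinAt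
  have hzc1 : ∀ t ∈ Icc (0:ℝ) T, ContinuousOn (fun ξ => zδ ξ t) (Icc (0:ℝ) 1) :=
    fun t ht ξ hξ => (hzξ t ht ξ hξ).continuousWithinAt
  refine ⟨?_, ?_, ?_⟩
  · intro t ht
    rw [hζ, hbc t ht, hM0]
    simp
  · intro t ht
    simp only [hζ, TireParams.K1op]
    rw [Kop_sub_mulVec (K1_cont P) hMc (hzc1 t ht), KopM, hMnorm, Matrix.one_mulVec]
  · intro ξ hξ t ht
    have hξ' := Ioo_subset_Icc_self hξ
    have ht' := Ioo_subset_Icc_self ht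
    refine ⟨?_, ?_, ?_⟩
    · simp only [hζ]
      exact (hzξ t ht' ξ hξ').sub (hasDerivWithinAt_mat_mulVec (hM.1 ξ hξ') _)
    · simp only [hζ]
      exact (hzt ξ hξ' t ht').sub (hasDerivWithinAt_mulVec_const _
        (hasDerivWithinAt_mulVec_const _ (hXδ t ht')).neg)
    · have hp := hpde ξ hξ t ht
      simp only [hζ, TireParams.K2op, TireParams.K3op] at hp ⊢
      rw [Kop_sub_mulVec (K2_cont P) hMc (hzc1 t ht'),
        Kop_sub_mulVec (K3_cont P) hMc (hzc1 t ht')]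
      generalize varpi (G1mat m Iz l1 l2) (A1mat P.vx) q (Xδ t) = v at *
      have ho := congrArg (fun A : Mat2 => A.mulVec v) (hMode ξ hξ)
      simp only [Matrix.add_mulVec, Matrix.smul_mulVec, ← Matrix.mulVec_mulVec,
        Matrix.mulVec_add, Matrix.mulVec_sub, Matrix.sub_mulVec, smul_add, smul_sub] at ho hp ⊢
      linear_combination hp - ho
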